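/- Reference eigenvector: let K = diag(k₁, k₂, k₃) be a diagonal twist and let |t₀⟩ = e₁ ⊗ e₁ ⊗ ⋯ ⊗ e₁ ∈ H (N factors). Then for every u ≠ 0, writing λ = u³, |t₀⟩ is a common eigenvector of the transfer matrices: T₁(u)|t₀⟩ = t_{1,0}(λ)|t₀⟩ with t_{1,0}(λ) = k₁ ∏_{a=1}^{N} (λq/ξ_a − ξ_a/(λq)) + (k₂ + k₃) ∏_{a=1}^{N} (λ/ξ_a − ξ_a/λ), and T₂(u)|t₀⟩ = t_{2,0}(λ)|t₀⟩ with t_{2,0}(λ) = ∏_{a=1}^{N} (λ/(qξ_a) − qξ_a/λ) · [ k₂k₃ ∏_{a=1}^{N} (λ/ξ_a − ξ_a/λ) + (k₁k₂ + k₁k₃) ∏_{a=1}^{N} (λq/ξ_a − ξ_a/(λq)) ]. -/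

import Mathlib

open Matrix Kronecker BigOperators

/-- Elementary 3×3 matrices `E i j`. -/
noncomputable def Eb (i j : Fin 3) : Matrix (Fin 3) (Fin 3) ℂ :=
  Matrix.single i j 1

/-- Principal gradation trigonometric R-matrix of `U_q(gl₃^)`, with spectral
parameter `λ = u³` parametrized by the cube root `u`. -/
noncomputable def RpM (q u : ℂ) : Matrix (Fin 3 × Fin 3) (Fin 3 × Fin 3) ℂ :=
  (∑ k : Fin 3, ∑ p : Fin 3,
    if k = p then (u ^ 3 * q - (u ^ 3 * q)⁻¹) • (Eb k k ⊗ₖ Eb k k)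
    else (u ^ 3 - (u ^ 3)⁻¹) • (Eb k k ⊗ₖ Eb p p))
  + (q - q⁻¹) • ∑ k : Fin 3, ∑ p : Fin 3,
      (if k < p then
        u ^ ((3 : ℤ) - 2 * (((p : ℕ) : ℤ) - ((k : ℕ) : ℤ))) • (Eb k p ⊗ₖ Eb p k)
        + u ^ (2 * (((p : ℕ) : ℤ) - ((k : ℕ) : ℤ)) - (3 : ℤ)) • (Eb p k ⊗ₖ Eb k p)
      else 0)

/-- Diagonal twist matrix `K⁽¹⁾ = diag(α, β, γ)`. -/
noncomputable def Ktw1 (α β γ : ℂ) : Matrix (Fin 3) (Fin 3) ℂ :=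
  Matrix.diagonal ![α, β, γ]

/-- Cyclic twist matrix `K⁽²⁾ = αE₁₃ + βE₂₁ + γE₃₂`. -/
noncomputable def Ktw2 (α β γ : ℂ) : Matrix (Fin 3) (Fin 3) ℂ :=
  α • Eb 0 2 + β • Eb 1 0 + γ • Eb 2 1

/-- Cyclic twist matrix `K⁽³⁾ = βE₁₂ + γE₂₃ + αE₃₁`. -/
noncomputable def Ktw3 (α β γ : ℂ) : Matrix (Fin 3) (Fin 3) ℂ :=
  β • Eb 0 1 + γ • Eb 1 2 + α • Eb 2 0

/-- Index type of the quantum space `H = (ℂ³)^{⊗N}`. -/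
abbrev HIdx (N : ℕ) := Fin N → Fin 3

/-- `R_{a,b}(u)`: the R-matrix acting on the auxiliary space and the `b`-th
factor of the quantum space, identity elsewhere. -/
noncomputable def Raux (N : ℕ) (q u : ℂ) (b : Fin N) :
    Matrix (Fin 3 × HIdx N) (Fin 3 × HIdx N) ℂ :=
  Matrix.of fun x y =>
    RpM q u (x.1, x.2 b) (y.1, y.2 b) * (if ∀ c, c ≠ b → x.2 c = y.2 c then 1 else 0)

/-- The twist matrix acting on the auxiliary space, identity on `H`. -/
noncomputable def Kaux (N : ℕ) (K : Matrix (Fin 3) (Fin 3) ℂ) :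
    Matrix (Fin 3 × HIdx N) (Fin 3 × HIdx N) ℂ :=
  Matrix.of fun x y => K x.1 y.1 * (if x.2 = y.2 then 1 else 0)

/-- Monodromy matrix `M(u) = K_a R_{a,N}(u/ζ_N) ⋯ R_{a,1}(u/ζ_1)`. -/
noncomputable def Mon (N : ℕ) (q : ℂ) (ζ : Fin N → ℂ) (K : Matrix (Fin 3) (Fin 3) ℂ)
    (u : ℂ) : Matrix (Fin 3 × HIdx N) (Fin 3 × HIdx N) ℂ :=
  Kaux N K * (((List.finRange N).reverse.map fun b => Raux N q (u / ζ b) b).prod)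

/-- Transfer matrix `T₁(u) = tr_a M(u)`. -/
noncomputable def T1 (N : ℕ) (q : ℂ) (ζ : Fin N → ℂ) (K : Matrix (Fin 3) (Fin 3) ℂ)
    (u : ℂ) : Matrix (HIdx N) (HIdx N) ℂ :=
  Matrix.of fun f g => ∑ i : Fin 3, Mon N q ζ K u (i, f) (i, g)

/-- The q-antisymmetric projector `P⁻ = R_q(p⁻¹)/(2(q⁻¹ − q))`. -/
noncomputable def Pm (q p : ℂ) : Matrix (Fin 3 × Fin 3) (Fin 3 × Fin 3) ℂ :=
  (2 * (q⁻¹ - q))⁻¹ • RpM q p⁻¹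

/-- Embedding of an operator on (auxiliary space a) ⊗ H into
(aux a) ⊗ (aux b) ⊗ H, identity on aux b. -/
noncomputable def embA (N : ℕ) (M : Matrix (Fin 3 × HIdx N) (Fin 3 × HIdx N) ℂ) :
    Matrix (Fin 3 × Fin 3 × HIdx N) (Fin 3 × Fin 3 × HIdx N) ℂ :=
  Matrix.of fun x y => M (x.1, x.2.2) (y.1, y.2.2) * (if x.2.1 = y.2.1 then 1 else 0)

/-- Embedding of an operator on (auxiliary space b) ⊗ H into
(aux a) ⊗ (aux b) ⊗ H, identity on aux a. -/
noncomputable def embB (N : ℕ) (M : Matrix (Fin 3 × HIdx N) (Fin 3 × HIdx N) ℂ) :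
    Matrix (Fin 3 × Fin 3 × HIdx N) (Fin 3 × Fin 3 × HIdx N) ℂ :=
  Matrix.of fun x y => M (x.2.1, x.2.2) (y.2.1, y.2.2) * (if x.1 = y.1 then 1 else 0)

/-- Embedding of an operator on (aux a) ⊗ (aux b) into (aux a) ⊗ (aux b) ⊗ H. -/
noncomputable def embP (N : ℕ) (P : Matrix (Fin 3 × Fin 3) (Fin 3 × Fin 3) ℂ) :
    Matrix (Fin 3 × Fin 3 × HIdx N) (Fin 3 × Fin 3 × HIdx N) ℂ :=
  Matrix.of fun x y => P (x.1, x.2.1) (y.1, y.2.1) * (if x.2.2 = y.2.2 then 1 else 0)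

/-- Fused transfer matrix `T₂(u) = tr_{ab}(P⁻_{ab} M_b(u) M_a(u/p))`. -/
noncomputable def T2 (N : ℕ) (q p : ℂ) (ζ : Fin N → ℂ) (K : Matrix (Fin 3) (Fin 3) ℂ)
    (u : ℂ) : Matrix (HIdx N) (HIdx N) ℂ :=
  Matrix.of fun f g => ∑ ia : Fin 3, ∑ ib : Fin 3,
    (embP N (Pm q p) * embB N (Mon N q ζ K u) * embA N (Mon N q ζ K (u / p)))
      (ia, ib, f) (ia, ib, g)

/-- The reference vector `|t₀⟩ = e₁ ⊗ ⋯ ⊗ e₁` in `H`. -/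
noncomputable def t0 (N : ℕ) : HIdx N → ℂ :=
  fun f => if f = fun _ => (0 : Fin 3) then 1 else 0

/-- Coefficient of `E i j ⊗ E j i`, `i ≠ j`, in the R-matrix. -/
noncomputable def exchangeCoeff (q u : ℂ) (i j : Fin 3) : ℂ :=
  (q - q⁻¹) * if i < j then u ^ ((3 : ℤ) - 2 * (((j : ℕ) : ℤ) - ((i : ℕ) : ℤ)))
    else u ^ (2 * (((i : ℕ) : ℤ) - ((j : ℕ) : ℤ)) - (3 : ℤ))

lemma sum_RpM_mul (q u : ℂ) (i j : Fin 3) (F : Fin 3 → Fin 3 → ℂ) :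
    ∑ k, ∑ l, RpM q u (i, j) (k, l) * F k l =
      if i = j then (u ^ 3 * q - (u ^ 3 * q)⁻¹) * F i i
      else (u ^ 3 - (u ^ 3)⁻¹) * F i j + exchangeCoeff q u i j * F j i := by
  fin_cases i <;> fin_cases j <;>
    simp [RpM, exchangeCoeff, Eb, Fin.sum_univ_three, Matrix.single_apply,
      Matrix.kroneckerMap_apply] <;>
    ring

lemma Raux_mulVec_apply {N : ℕ} (q u : ℂ) (b : Fin N) (z : Fin 3 × HIdx N → ℂ)
    (i : Fin 3) (f : HIdx N) :
    (Raux N q u b *ᵥ z) (i, f) =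
      if i = f b then (u ^ 3 * q - (u ^ 3 * q)⁻¹) * z (i, f)
      else (u ^ 3 - (u ^ 3)⁻¹) * z (i, f)
        + exchangeCoeff q u i (f b) * z (f b, Function.update f b i) := by
  have key : ∀ k : Fin 3, ∑ g : HIdx N, Raux N q u b (i, f) (k, g) * z (k, g) =
      ∑ l, RpM q u (i, f b) (k, l) * z (k, Function.update f b l) := by
    intro k
    simp only [Raux, Matrix.of_apply, mul_ite, mul_one, mul_zero, ite_mul, zero_mul]
    rw [← Finset.sum_filter]
    have hupd : ∀ g : HIdx N, (∀ c, c ≠ b → f c = g c) → Function.update f b (g b) = g := by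
      intro g hg
      ext c
      by_cases h : c = b
      · subst h; simp
      · simp [h, hg c h]
    refine Finset.sum_nbij' (fun g => g b) (fun l => Function.update f b l) ?_ ?_ ?_ ?_ ?_
    · simp
    · intro l _
      simp +contextual
    · intro g hg
      exact hupd g (Finset.mem_filter.mp hg).2
    · simp
    · intro g hg
      rw [hupd g (Finset.mem_filter.mp hg).2]
  rw [Matrix.mulVec, dotProduct, Fintype.sum_prod_type]
  simp only [key]
  rw [sum_RpM_mul q u i (f b) (fun k l => z (k, Function.update f b l))]
  split_ifs with h
  · rw [h]; simp
  · simp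

/-- The vector `e i ⊗ x` of `ℂ³ ⊗ H`. -/
def auxTensor {N : ℕ} (i : Fin 3) (x : HIdx N → ℂ) : Fin 3 × HIdx N → ℂ :=
  fun y => if y.1 = i then x y.2 else 0

/-- The basis vector of `H` equal to `e k` at site `b` and to `e 0` elsewhere. -/
noncomputable def excited {N : ℕ} (b : Fin N) (k : Fin 3) : HIdx N → ℂ :=
  Pi.single (Function.update 0 b k) 1

lemma t0_eq_single (N : ℕ) : t0 N = Pi.single (0 : HIdx N) 1 := by
  ext f
  simp only [t0, Pi.single_apply]
  rfl

lemma auxTensor_smul {N : ℕ} (i : Fin 3) (r : ℂ) (x : HIdx N → ℂ) :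
    auxTensor i (r • x) = r • auxTensor i x := by
  ext y
  simp [auxTensor]

lemma auxTensor_add {N : ℕ} (i : Fin 3) (x y : HIdx N → ℂ) :
    auxTensor i (x + y) = auxTensor i x + auxTensor i y := by
  ext z
  simp only [auxTensor, Pi.add_apply]
  split_ifs <;> simp

lemma Raux_mulVec_ground {N : ℕ} (q u : ℂ) (b : Fin N) (x : HIdx N → ℂ)
    (hx : ∀ f, f b ≠ 0 → x f = 0) :
    Raux N q u b *ᵥ auxTensor 0 x = (u ^ 3 * q - (u ^ 3 * q)⁻¹) • auxTensor 0 x := by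
  ext ⟨i, f⟩
  rw [Raux_mulVec_apply]
  by_cases hi : i = f b
  · simp [hi]
  · rw [if_neg hi]
    by_cases h0 : i = 0
    · subst h0
      simp [auxTensor, hx f (Ne.symm hi), Ne.symm hi]
    · simp [auxTensor, h0, hx (Function.update f b i) (by simpa using h0)]

lemma Raux_mulVec_t0 {N : ℕ} (q u : ℂ) (b : Fin N) {k : Fin 3} (hk : k ≠ 0) :
    Raux N q u b *ᵥ auxTensor k (t0 N) =
      (u ^ 3 - (u ^ 3)⁻¹) • auxTensor k (t0 N)
        + exchangeCoeff q u 0 k • auxTensor 0 (excited b k) := by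
  ext ⟨i, f⟩
  rw [Raux_mulVec_apply]
  have h1 : f = 0 → f b = 0 := fun h => by rw [h]; rfl
  have h2 : f = Function.update (0 : HIdx N) b k → f b = k := fun h => by rw [h]; simp
  have h3 : f b = k → (Function.update f b 0 = 0 ↔ f = Function.update (0 : HIdx N) b k) := by
    intro hf
    constructor
    · intro h
      rw [← h, ← hf]; simp
    · intro h
      rw [h]; simp
  have h4 : Function.update f b i = 0 → i = 0 := fun h => by simpa using congrFun h b
  simp only [t0_eq_single, auxTensor, excited, Pi.single_apply, Pi.add_apply, Pi.smul_apply,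
    smul_eq_mul]
  grind

lemma Raux_mulVec_excited {N : ℕ} (q u : ℂ) (b : Fin N) {k : Fin 3} (hk : k ≠ 0) :
    Raux N q u b *ᵥ auxTensor 0 (excited b k) =
      exchangeCoeff q u k 0 • auxTensor k (t0 N)
        + auxTensor 0 ((u ^ 3 - (u ^ 3)⁻¹) • excited b k) := by
  ext ⟨i, f⟩
  rw [Raux_mulVec_apply]
  have h1 : f = 0 → f b = 0 := fun h => by rw [h]; rfl
  have h2 : f = Function.update (0 : HIdx N) b k → f b = k := fun h => by rw [h]; simp
  have h3 : f b = 0 → (Function.update f b k = Function.update (0 : HIdx N) b k ↔ f = 0) := by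
    intro hf
    constructor
    · intro h
      ext c
      by_cases hc : c = b
      · subst hc; simp [hf]
      · simpa [hc] using congrArg Fin.val (congrFun h c)
    · intro h
      rw [h]
  have h4 : Function.update f b i = Function.update (0 : HIdx N) b k → i = k :=
    fun h => by simpa using congrFun h b
  simp only [t0_eq_single, auxTensor, excited, Pi.single_apply, Pi.add_apply, Pi.smul_apply,
    smul_eq_mul]
  grind

/-- Ordered product of the R-matrices over a list of sites. -/
noncomputable def RauxProd {N : ℕ} (q : ℂ) (ζ : Fin N → ℂ) (l : List (Fin N)) (u : ℂ) :
    Matrix (Fin 3 × HIdx N) (Fin 3 × HIdx N) ℂ :=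
  (l.map fun b => Raux N q (u / ζ b) b).prod

/-- Product over a list of sites of the weights with both spins equal. -/
noncomputable def equalWeight {N : ℕ} (q : ℂ) (ζ : Fin N → ℂ) (l : List (Fin N)) (u : ℂ) : ℂ :=
  (l.map fun b => (u / ζ b) ^ 3 * q - ((u / ζ b) ^ 3 * q)⁻¹).prod

/-- Product over a list of sites of the weights with distinct, unexchanged spins. -/
noncomputable def distinctWeight {N : ℕ} (ζ : Fin N → ℂ) (l : List (Fin N)) (u : ℂ) : ℂ :=
  (l.map fun b => (u / ζ b) ^ 3 - ((u / ζ b) ^ 3)⁻¹).prod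

lemma RauxProd_cons_mulVec {N : ℕ} (q : ℂ) (ζ : Fin N → ℂ) (b : Fin N) (l : List (Fin N))
    (u : ℂ) (z : Fin 3 × HIdx N → ℂ) :
    RauxProd q ζ (b :: l) u *ᵥ z = Raux N q (u / ζ b) b *ᵥ (RauxProd q ζ l u *ᵥ z) := by
  simp [RauxProd, Matrix.mulVec_mulVec]

lemma RauxProd_mulVec_ground {N : ℕ} (q : ℂ) (ζ : Fin N → ℂ) (l : List (Fin N)) (u : ℂ)
    (x : HIdx N → ℂ) (hx : ∀ b ∈ l, ∀ f, f b ≠ 0 → x f = 0) :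
    RauxProd q ζ l u *ᵥ auxTensor 0 x = equalWeight q ζ l u • auxTensor 0 x := by
  induction l with
  | nil => simp [RauxProd, equalWeight]
  | cons b l ih =>
    rw [RauxProd_cons_mulVec, ih fun c hc => hx c (List.mem_cons_of_mem _ hc),
      Matrix.mulVec_smul, Raux_mulVec_ground _ _ _ _ (hx b List.mem_cons_self), smul_smul]
    simp [equalWeight, mul_comm]

/-- Exciting and then de-exciting the reference state with spectral parameters `u / p` and `u`
gives a telescoping eigenvalue. -/
lemma exists_RauxProd_mulVec {N : ℕ} {q p u : ℂ} (hq : q ≠ 0) (hp : p ^ 3 = q) (hu : u ≠ 0)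
    {ζ : Fin N → ℂ} (hζ : ∀ b, ζ b ≠ 0) {k : Fin 3} (hk : k ≠ 0) {l : List (Fin N)}
    (hl : l.Nodup) :
    ∃ x y : HIdx N → ℂ, ∃ s : ℂ,
      (∀ c ∉ l, ∀ f, f c ≠ 0 → x f = 0) ∧ (∀ c ∉ l, ∀ f, f c ≠ 0 → y f = 0) ∧
      RauxProd q ζ l (u / p) *ᵥ auxTensor k (t0 N) =
        distinctWeight ζ l (u / p) • auxTensor k (t0 N) + auxTensor 0 x ∧
      RauxProd q ζ l u *ᵥ auxTensor 0 x = s • auxTensor k (t0 N) + auxTensor 0 y ∧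
      exchangeCoeff q p⁻¹ k 0 * s = (q - q⁻¹) *
        (distinctWeight ζ l u * equalWeight q ζ l (u / p)
          - equalWeight q ζ l u * distinctWeight ζ l (u / p)) := by
  have hp0 : p ≠ 0 := by rintro rfl; exact hq (by rw [← hp]; simp)
  have aux0 : auxTensor 0 (0 : HIdx N → ℂ) = 0 := by ext y; simp [auxTensor]
  induction l with
  | nil =>
    refine ⟨0, 0, 0, by simp, by simp, ?_, ?_, ?_⟩ <;>
      simp [RauxProd, distinctWeight, equalWeight, aux0]
  | cons b l ih =>
    obtain ⟨hb, hl⟩ := List.nodup_cons.mp hl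
    obtain ⟨x, y, s, hx, hy, h1, h2, h3⟩ := ih hl
    have hexc : ∀ c, c ≠ b → ∀ f : HIdx N, f c ≠ 0 → excited b k f = 0 := by
      intro c hc f hf
      rw [excited, Pi.single_apply, if_neg]
      rintro rfl
      simp [hc] at hf
    set v := u / p with hv
    refine ⟨(distinctWeight ζ l v * exchangeCoeff q (v / ζ b) 0 k) • excited b k
        + ((v / ζ b) ^ 3 * q - ((v / ζ b) ^ 3 * q)⁻¹) • x,
      (distinctWeight ζ l v * exchangeCoeff q (v / ζ b) 0 k) • equalWeight q ζ l u •
        ((u / ζ b) ^ 3 - ((u / ζ b) ^ 3)⁻¹) • excited b k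
        + ((v / ζ b) ^ 3 * q - ((v / ζ b) ^ 3 * q)⁻¹) • (s • exchangeCoeff q (u / ζ b) 0 k •
            excited b k + ((u / ζ b) ^ 3 * q - ((u / ζ b) ^ 3 * q)⁻¹) • y),
      distinctWeight ζ l v * exchangeCoeff q (v / ζ b) 0 k * equalWeight q ζ l u *
          exchangeCoeff q (u / ζ b) k 0
        + ((v / ζ b) ^ 3 * q - ((v / ζ b) ^ 3 * q)⁻¹) *
          ((u / ζ b) ^ 3 - ((u / ζ b) ^ 3)⁻¹) * s, ?_, ?_, ?_, ?_, ?_⟩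
    · intro c hc f hf
      rw [List.mem_cons, not_or] at hc
      simp [hexc c hc.1 f hf, hx c hc.2 f hf]
    · intro c hc f hf
      rw [List.mem_cons, not_or] at hc
      simp [hexc c hc.1 f hf, hy c hc.2 f hf]
    · rw [RauxProd_cons_mulVec, h1, Matrix.mulVec_add, Matrix.mulVec_smul, Raux_mulVec_t0 _ _ _ hk,
        Raux_mulVec_ground _ _ _ _ (hx b hb)]
      simp only [auxTensor_add, auxTensor_smul, distinctWeight, List.map_cons, List.prod_cons]
      module
    · rw [auxTensor_add, Matrix.mulVec_add, RauxProd_cons_mulVec, RauxProd_cons_mulVec,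
        auxTensor_smul, auxTensor_smul, Matrix.mulVec_smul (RauxProd q ζ l u),
        Matrix.mulVec_smul (RauxProd q ζ l u), h2,
        RauxProd_mulVec_ground _ _ _ _ _ fun c hc => hexc c (by rintro rfl; exact hb hc)]
      simp only [Matrix.mulVec_smul, Matrix.mulVec_add, Raux_mulVec_t0 _ _ _ hk,
        Raux_mulVec_excited _ _ _ hk, Raux_mulVec_ground _ _ _ _ (hy b hb), auxTensor_add,
        auxTensor_smul]
      module
    · have hw : exchangeCoeff q p⁻¹ k 0 * exchangeCoeff q (v / ζ b) 0 k *
          exchangeCoeff q (u / ζ b) k 0 = (q - q⁻¹) ^ 3 := by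
        have := hζ b
        rw [hv]
        fin_cases k
        · exact absurd rfl hk
        · simp [exchangeCoeff]
          field_simp
        · simp [exchangeCoeff]
          field_simp
      have hz : ((u / ζ b) ^ 3 - ((u / ζ b) ^ 3)⁻¹) * ((v / ζ b) ^ 3 * q - ((v / ζ b) ^ 3 * q)⁻¹)
          - ((u / ζ b) ^ 3 * q - ((u / ζ b) ^ 3 * q)⁻¹) * ((v / ζ b) ^ 3 - ((v / ζ b) ^ 3)⁻¹)
          = (q - q⁻¹) ^ 2 := by
        have := hζ b
        rw [hv, ← hp]
        field_simp
        ring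
      simp only [distinctWeight, equalWeight, List.map_cons, List.prod_cons] at h3 ⊢
      linear_combination ((List.map (fun b => (v / ζ b) ^ 3 - ((v / ζ b) ^ 3)⁻¹) l).prod *
        (List.map (fun b => (u / ζ b) ^ 3 * q - ((u / ζ b) ^ 3 * q)⁻¹) l).prod) *
          (hw - (q - q⁻¹) * hz)
        + ((v / ζ b) ^ 3 * q - ((v / ζ b) ^ 3 * q)⁻¹) *
          ((u / ζ b) ^ 3 - ((u / ζ b) ^ 3)⁻¹) * h3

lemma equalWeight_reverse_finRange {N : ℕ} (q : ℂ) (ζ : Fin N → ℂ) (u : ℂ) :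
    equalWeight q ζ (List.finRange N).reverse u =
      ∏ a, ((u / ζ a) ^ 3 * q - ((u / ζ a) ^ 3 * q)⁻¹) := by
  rw [equalWeight, List.map_reverse, List.prod_reverse, Fin.prod_univ_def]

lemma distinctWeight_reverse_finRange {N : ℕ} (ζ : Fin N → ℂ) (u : ℂ) :
    distinctWeight ζ (List.finRange N).reverse u =
      ∏ a, ((u / ζ a) ^ 3 - ((u / ζ a) ^ 3)⁻¹) := by
  rw [distinctWeight, List.map_reverse, List.prod_reverse, Fin.prod_univ_def]

/-- The action on `H` of the auxiliary-space matrix entry `(j, i)` of an operator on `ℂ³ ⊗ H`. -/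
noncomputable def auxBlock {N : ℕ} (M : Matrix (Fin 3 × HIdx N) (Fin 3 × HIdx N) ℂ)
    (j i : Fin 3) (x : HIdx N → ℂ) : HIdx N → ℂ :=
  fun f => (M *ᵥ auxTensor i x) (j, f)

lemma auxBlock_apply {N : ℕ} (M : Matrix (Fin 3 × HIdx N) (Fin 3 × HIdx N) ℂ)
    (j i : Fin 3) (x : HIdx N → ℂ) (f : HIdx N) :
    auxBlock M j i x f = ∑ g, M (j, f) (i, g) * x g := by
  simp only [auxBlock, Matrix.mulVec, dotProduct, Fintype.sum_prod_type_right, auxTensor, mul_ite,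
    mul_zero, Finset.sum_ite_eq', Finset.mem_univ, if_true]

lemma auxBlock_smul {N : ℕ} (M : Matrix (Fin 3 × HIdx N) (Fin 3 × HIdx N) ℂ)
    (j i : Fin 3) (r : ℂ) (x : HIdx N → ℂ) :
    auxBlock M j i (r • x) = r • auxBlock M j i x := by
  ext f
  simp [auxBlock, auxTensor_smul, Matrix.mulVec_smul]

lemma auxBlock_zero {N : ℕ} (M : Matrix (Fin 3 × HIdx N) (Fin 3 × HIdx N) ℂ) (j i : Fin 3) :
    auxBlock M j i 0 = 0 := by
  ext f
  simp [auxBlock_apply]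

lemma auxBlock_t0_apply {N : ℕ} (M : Matrix (Fin 3 × HIdx N) (Fin 3 × HIdx N) ℂ)
    (j i : Fin 3) (f : HIdx N) : auxBlock M j i (t0 N) f = M (j, f) (i, 0) := by
  simp [auxBlock_apply, t0_eq_single, Pi.single_apply]

lemma T1_mulVec_t0 {N : ℕ} (q : ℂ) (ζ : Fin N → ℂ) (K : Matrix (Fin 3) (Fin 3) ℂ) (u : ℂ) :
    T1 N q ζ K u *ᵥ t0 N = ∑ i, auxBlock (Mon N q ζ K u) i i (t0 N) := by
  ext f
  rw [t0_eq_single, Matrix.mulVec_single_one, ← t0_eq_single]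
  simp [auxBlock_t0_apply, T1]

lemma T2_mulVec_t0 {N : ℕ} (q p : ℂ) (ζ : Fin N → ℂ) (K : Matrix (Fin 3) (Fin 3) ℂ) (u : ℂ) :
    T2 N q p ζ K u *ᵥ t0 N = (2 * (q⁻¹ - q))⁻¹ • ∑ ia, ∑ ib,
      if ia = ib then
        (p⁻¹ ^ 3 * q - (p⁻¹ ^ 3 * q)⁻¹) •
          auxBlock (Mon N q ζ K u) ia ia (auxBlock (Mon N q ζ K (u / p)) ia ia (t0 N))
      else
        (p⁻¹ ^ 3 - (p⁻¹ ^ 3)⁻¹) •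
          auxBlock (Mon N q ζ K u) ib ib (auxBlock (Mon N q ζ K (u / p)) ia ia (t0 N))
        + exchangeCoeff q p⁻¹ ia ib •
          auxBlock (Mon N q ζ K u) ia ib (auxBlock (Mon N q ζ K (u / p)) ib ia (t0 N)) := by
  ext f
  have key : ∀ ia ib : Fin 3,
      (embP N (Pm q p) * embB N (Mon N q ζ K u) * embA N (Mon N q ζ K (u / p)))
        (ia, ib, f) (ia, ib, 0) = (2 * (q⁻¹ - q))⁻¹ * ∑ ja, ∑ jb, RpM q p⁻¹ (ia, ib) (ja, jb) *
          auxBlock (Mon N q ζ K u) jb ib (auxBlock (Mon N q ζ K (u / p)) ja ia (t0 N)) f := by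
    intro ia ib
    have hPB : ∀ (ja jb : Fin 3) (g : HIdx N),
        (embP N (Pm q p) * embB N (Mon N q ζ K u)) (ia, ib, f) (ja, jb, g) =
          ∑ kb, Pm q p (ia, ib) (ja, kb) * Mon N q ζ K u (kb, f) (jb, g) := by
      intro ja jb g
      simp [Matrix.mul_apply, Fintype.sum_prod_type, embP, embB]
    rw [Matrix.mul_apply]
    simp only [Fintype.sum_prod_type, hPB, auxBlock_apply (Mon N q ζ K u), auxBlock_t0_apply]
    simp only [embA, Pm, Matrix.of_apply, Matrix.smul_apply, smul_eq_mul, mul_ite, mul_one,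
      mul_zero, Finset.sum_ite_irrel, Finset.sum_const_zero, Finset.sum_ite_eq', Finset.mem_univ,
      if_true, Finset.mul_sum, Finset.sum_mul]
    refine Finset.sum_congr rfl fun ja _ => ?_
    rw [Finset.sum_comm]
    refine Finset.sum_congr rfl fun jb _ => Finset.sum_congr rfl fun g _ => ?_
    ring
  rw [t0_eq_single, Matrix.mulVec_single_one, ← t0_eq_single]
  simp only [Matrix.col_apply, T2, Matrix.of_apply, key, sum_RpM_mul, Pi.smul_apply,
    Finset.sum_apply, smul_eq_mul, Finset.mul_sum]
  refine Finset.sum_congr rfl fun ia _ => Finset.sum_congr rfl fun ib _ => ?_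
  split_ifs with h
  · subst h; simp
  · simp

lemma auxBlock_Mon_diagonal {N : ℕ} (q : ℂ) (ζ : Fin N → ℂ) (k₁ k₂ k₃ u : ℂ) (j i : Fin 3)
    (x : HIdx N → ℂ) :
    auxBlock (Mon N q ζ (Ktw1 k₁ k₂ k₃) u) j i x =
      ![k₁, k₂, k₃] j • auxBlock (RauxProd q ζ (List.finRange N).reverse u) j i x := by
  ext f
  simp only [auxBlock, Mon, ← Matrix.mulVec_mulVec, Pi.smul_apply, smul_eq_mul]
  change (Kaux N (Ktw1 k₁ k₂ k₃) *ᵥ (RauxProd q ζ (List.finRange N).reverse u *ᵥ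
    auxTensor i x)) (j, f) = _
  simp [Matrix.mulVec, dotProduct, Fintype.sum_prod_type, Kaux, Ktw1, Matrix.diagonal_apply]

/-- Reading off a block from the decomposition `r e_k ⊗ t₀ + e_0 ⊗ x`. -/
lemma auxBlock_eq_of_mulVec_eq {N : ℕ} {M : Matrix (Fin 3 × HIdx N) (Fin 3 × HIdx N) ℂ}
    {i k : Fin 3} {r : ℂ} {w x z : HIdx N → ℂ}
    (h : M *ᵥ auxTensor i w = r • auxTensor k z + auxTensor 0 x) (j : Fin 3) :
    auxBlock M j i w = (if j = k then r • z else 0) + if j = 0 then x else 0 := by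
  ext f
  simp only [auxBlock, h, Pi.add_apply, Pi.smul_apply, auxTensor, smul_eq_mul]
  split_ifs <;> simp

lemma auxBlock_Mon_zero {N : ℕ} (q : ℂ) (ζ : Fin N → ℂ) (k₁ k₂ k₃ u : ℂ) (j : Fin 3) :
    auxBlock (Mon N q ζ (Ktw1 k₁ k₂ k₃) u) j 0 (t0 N) =
      if j = 0 then (k₁ * equalWeight q ζ (List.finRange N).reverse u) • t0 N else 0 := by
  have h : RauxProd q ζ (List.finRange N).reverse u *ᵥ auxTensor 0 (t0 N) =
      (0 : ℂ) • auxTensor 0 (t0 N)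
        + auxTensor 0 (equalWeight q ζ (List.finRange N).reverse u • t0 N) := by
    rw [RauxProd_mulVec_ground, auxTensor_smul, zero_smul, zero_add]
    rintro b - f hf
    rw [t0_eq_single, Pi.single_apply, if_neg]
    rintro rfl
    exact hf rfl
  rw [auxBlock_Mon_diagonal, auxBlock_eq_of_mulVec_eq h]
  split_ifs with hj
  · subst hj
    simp [smul_smul]
  · simp

section

variable {N : ℕ} {q p u : ℂ} {ζ : Fin N → ℂ} {k : Fin 3}

lemma auxBlock_Mon_ne_zero (hq : q ≠ 0) (hp : p ^ 3 = q) (hu : u ≠ 0) (hζ : ∀ b, ζ b ≠ 0)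
    (k₁ k₂ k₃ : ℂ) (hk : k ≠ 0) {j : Fin 3} (hj : j ≠ 0) :
    auxBlock (Mon N q ζ (Ktw1 k₁ k₂ k₃) u) j k (t0 N) =
      if j = k then
        (![k₁, k₂, k₃] k * distinctWeight ζ (List.finRange N).reverse u) • t0 N
      else 0 := by
  have hp0 : p ≠ 0 := by rintro rfl; exact hq (by rw [← hp]; simp)
  obtain ⟨x, y, s, -, -, h, -, -⟩ := exists_RauxProd_mulVec hq hp (mul_ne_zero hu hp0) hζ hk
    (List.nodup_reverse.mpr (List.nodup_finRange N))
  rw [mul_div_cancel_right₀ u hp0] at h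
  rw [auxBlock_Mon_diagonal, auxBlock_eq_of_mulVec_eq h, if_neg hj, add_zero]
  split_ifs with hjk
  · rw [hjk, smul_smul]
  · simp

lemma auxBlock_Mon_exchange (hq : q ≠ 0) (hp : p ^ 3 = q) (hu : u ≠ 0) (hζ : ∀ b, ζ b ≠ 0)
    (k₁ k₂ k₃ : ℂ) (hk : k ≠ 0) :
    exchangeCoeff q p⁻¹ k 0 • auxBlock (Mon N q ζ (Ktw1 k₁ k₂ k₃) u) k 0
        (auxBlock (Mon N q ζ (Ktw1 k₁ k₂ k₃) (u / p)) 0 k (t0 N)) =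
      (k₁ * ![k₁, k₂, k₃] k * ((q - q⁻¹) *
        (distinctWeight ζ (List.finRange N).reverse u *
            equalWeight q ζ (List.finRange N).reverse (u / p)
          - equalWeight q ζ (List.finRange N).reverse u *
            distinctWeight ζ (List.finRange N).reverse (u / p)))) • t0 N := by
  obtain ⟨x, y, s, -, -, h1, h2, h3⟩ := exists_RauxProd_mulVec hq hp hu hζ hk
    (List.nodup_reverse.mpr (List.nodup_finRange N))
  rw [← h3, auxBlock_Mon_diagonal q ζ k₁ k₂ k₃ (u / p), auxBlock_eq_of_mulVec_eq h1,
    auxBlock_smul, auxBlock_Mon_diagonal, if_neg hk.symm, if_pos rfl, zero_add,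
    auxBlock_eq_of_mulVec_eq h2, if_pos rfl, if_neg hk, add_zero, Matrix.cons_val_zero]
  module

end

/-- `|t₀⟩` is a common eigenvector of `T₁` and `T₂` with the
explicit eigenvalues `t_{1,0}(λ)`, `t_{2,0}(λ)`, `λ = u³`. -/
theorem reference_eigenvector (N : ℕ) (hN : 1 ≤ N) (q p : ℂ)
    (hq : q ≠ 0) (hq2 : q ^ 2 ≠ 1) (hp : p ^ 3 = q)
    (ζ : Fin N → ℂ) (hζ : ∀ b, ζ b ≠ 0) (k₁ k₂ k₃ : ℂ)
    (u : ℂ) (hu : u ≠ 0) :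
    (T1 N q ζ (Ktw1 k₁ k₂ k₃) u).mulVec (t0 N)
      = (k₁ * ∏ a : Fin N, (u ^ 3 * q / ζ a ^ 3 - ζ a ^ 3 / (u ^ 3 * q))
          + (k₂ + k₃) * ∏ a : Fin N, (u ^ 3 / ζ a ^ 3 - ζ a ^ 3 / u ^ 3)) • t0 N
    ∧ (T2 N q p ζ (Ktw1 k₁ k₂ k₃) u).mulVec (t0 N)
      = ((∏ a : Fin N, (u ^ 3 / (q * ζ a ^ 3) - q * ζ a ^ 3 / u ^ 3))
          * (k₂ * k₃ * ∏ a : Fin N, (u ^ 3 / ζ a ^ 3 - ζ a ^ 3 / u ^ 3)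
            + (k₁ * k₂ + k₁ * k₃)
              * ∏ a : Fin N, (u ^ 3 * q / ζ a ^ 3 - ζ a ^ 3 / (u ^ 3 * q)))) • t0 N := by
  have hp0 : p ≠ 0 := by rintro rfl; exact hq (by rw [← hp]; simp)
  have hqq : q⁻¹ - q ≠ 0 := by
    intro h
    apply hq2
    field_simp at h
    linear_combination -h
  have hone : (1 : Fin 3) ≠ 0 := by decide
  have htwo : (2 : Fin 3) ≠ 0 := by decide
  have hv : u / p ≠ 0 := div_ne_zero hu hp0
  have ha : equalWeight q ζ (List.finRange N).reverse u =
      ∏ a : Fin N, (u ^ 3 * q / ζ a ^ 3 - ζ a ^ 3 / (u ^ 3 * q)) := by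
    simp only [equalWeight_reverse_finRange, div_pow, div_mul_eq_mul_div, inv_div]
  have hd : distinctWeight ζ (List.finRange N).reverse u =
      ∏ a : Fin N, (u ^ 3 / ζ a ^ 3 - ζ a ^ 3 / u ^ 3) := by
    simp only [distinctWeight_reverse_finRange, div_pow, inv_div]
  have hav : equalWeight q ζ (List.finRange N).reverse (u / p) =
      ∏ a : Fin N, (u ^ 3 / ζ a ^ 3 - ζ a ^ 3 / u ^ 3) := by
    rw [equalWeight_reverse_finRange]
    refine Finset.prod_congr rfl fun a _ => ?_
    have := hζ a
    rw [div_pow, div_pow, hp]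
    field_simp
  have hdv : distinctWeight ζ (List.finRange N).reverse (u / p) =
      ∏ a : Fin N, (u ^ 3 / (q * ζ a ^ 3) - q * ζ a ^ 3 / u ^ 3) := by
    simp only [distinctWeight_reverse_finRange, div_div, div_pow, mul_pow, hp, inv_div]
  constructor
  · rw [T1_mulVec_t0, Fin.sum_univ_three, auxBlock_Mon_zero,
      auxBlock_Mon_ne_zero hq hp hu hζ _ _ _ hone hone,
      auxBlock_Mon_ne_zero hq hp hu hζ _ _ _ htwo htwo, ha, hd]
    simp only [if_true, Matrix.cons_val]
    module
  · have hF1 := auxBlock_Mon_exchange hq hp hu hζ k₁ k₂ k₃ hone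
    have hF2 := auxBlock_Mon_exchange hq hp hu hζ k₁ k₂ k₃ htwo
    have hA : (p⁻¹ ^ 3 * q - (p⁻¹ ^ 3 * q)⁻¹) = 0 := by
      rw [inv_pow, hp, inv_mul_cancel₀ hq]; simp
    have hD : (p⁻¹ ^ 3 - (p⁻¹ ^ 3)⁻¹) = q⁻¹ - q := by
      rw [inv_pow, hp, inv_inv]
    have huB : ∀ j i : Fin 3, j ≠ 0 → i ≠ 0 → _ := fun j i hj hi =>
      auxBlock_Mon_ne_zero hq hp hu hζ k₁ k₂ k₃ hi hj
    have hvB : ∀ j i : Fin 3, j ≠ 0 → i ≠ 0 → _ := fun j i hj hi =>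
      auxBlock_Mon_ne_zero hq hp hv hζ k₁ k₂ k₃ hi hj
    rw [T2_mulVec_t0]
    simp only [Fin.sum_univ_three, hA, hD, hF1, hF2, Fin.reduceEq, if_true, if_false, zero_smul,
      huB 1 1 hone hone, huB 2 2 htwo htwo, hvB 1 1 hone hone, hvB 2 2 htwo htwo,
      hvB 1 2 hone htwo, hvB 2 1 htwo hone, auxBlock_Mon_zero, auxBlock_smul, auxBlock_zero,
      smul_zero, add_zero, zero_add, smul_smul, ha, hd, hav, hdv, ← add_smul, Matrix.cons_val]
    congr 1
    rw [inv_mul_eq_iff_eq_mul₀ (mul_ne_zero two_ne_zero hqq)]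
    ring
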